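/- Let (V, Φ) be a reduced irreducible root system with base Δ and let α ∈ Δ. The following are equivalent: (1) the fundamental weight η(α) (the element of the span of Φ dual to the coroot basis Δ^∨, i.e. satisfying ⟨η(α), α'^∨⟩ = δ_{α,α'} for α' ∈ Δ) is quasi-constant; (2) α is special or co-special; (3) the unique Δ-dominant element of the Weyl-group orbit W·α equals the unique (Δ \ {α})-dominant element of the orbit W_α·α, i.e. dom(α) = dom_α(α). -/

import Mathlib

open scoped BigOperators

/-- A reduced irreducible root system, with a choice of base of simple roots,
in a finite-dimensional `ℚ`-vector space `V` equipped with a positive definite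
symmetric bilinear form. -/
structure RootSystemBase (V : Type*) [AddCommGroup V] [Module ℚ V] : Type _ where
  /-- the symmetric bilinear form `( , )` -/
  B : V →ₗ[ℚ] V →ₗ[ℚ] ℚ
  B_symm : ∀ u v : V, B u v = B v u
  B_posdef : ∀ v : V, v ≠ 0 → 0 < B v v
  /-- the (finite) set of roots -/
  Φ : Finset V
  zero_notMem : (0 : V) ∉ Φ
  span_top : Submodule.span ℚ (Φ : Set V) = ⊤
  reflect_mem : ∀ β ∈ Φ, ∀ γ ∈ Φ, γ - (2 * B β γ / B β β) • β ∈ Φ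
  integral : ∀ β ∈ Φ, ∀ γ ∈ Φ, ∃ n : ℤ, 2 * B β γ / B β β = (n : ℚ)
  reduced : ∀ β ∈ Φ, ∀ c : ℚ, c • β ∈ Φ → c = 1 ∨ c = -1
  irreducible : ∀ s ⊆ Φ, s.Nonempty →
    (∀ β ∈ s, ∀ γ ∈ Φ, γ ∉ s → B β γ = 0) → s = Φ
  /-- the base of simple roots -/
  Δ : Finset V
  Δ_sub : Δ ⊆ Φ
  Δ_indep : LinearIndependent ℚ (Subtype.val : {x : V // x ∈ Δ} → V)
  /-- `coord v α` is the coefficient of the simple root `α` when `v` is written in the basis `Δ` -/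
  coord : V → V → ℚ
  coord_spec : ∀ v : V, v = ∑ α ∈ Δ, coord v α • α
  coord_int : ∀ β ∈ Φ, ∀ α ∈ Δ, ∃ n : ℤ, coord β α = (n : ℚ)
  pos_or_neg : ∀ β ∈ Φ, (∀ α ∈ Δ, 0 ≤ coord β α) ∨ (∀ α ∈ Δ, coord β α ≤ 0)

namespace RootSystemBase

variable {V : Type*} [AddCommGroup V] [Module ℚ V] (P : RootSystemBase V)

/-- the coroot `β^∨ = 2β/(β,β)` -/
noncomputable def coroot (β : V) : V := (2 / P.B β β) • β

/-- `m^∨_β(α)`: the coefficient of `α^∨` when `β^∨` is written in the basis `Δ^∨` -/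
noncomputable def corootMult (β α : V) : ℚ := P.coord (P.coroot β) α * (P.B α α / 2)

/-- the positive roots `Φ⁺` determined by the base `Δ` -/
noncomputable def posRoots : Finset V := P.Φ.filter (fun β => ∀ α ∈ P.Δ, 0 ≤ P.coord β α)

/-- a root is long if its length is maximal -/
def IsLong (β : V) : Prop := ∀ γ ∈ P.Φ, P.B γ γ ≤ P.B β β

/-- a root is short if its length is minimal -/
def IsShort (β : V) : Prop := ∀ γ ∈ P.Φ, P.B β β ≤ P.B γ γ

/-- `h` is the highest root: every (positive) root has smaller multiplicities -/
def IsHighestRoot (h : V) : Prop :=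
  h ∈ P.Φ ∧ ∀ β ∈ P.posRoots, ∀ α ∈ P.Δ, P.coord β α ≤ P.coord h α

/-- `h₂` is the root whose coroot is the highest root of the dual system `Φ^∨` -/
def IsDualHighest (h₂ : V) : Prop :=
  h₂ ∈ P.Φ ∧ ∀ β ∈ P.posRoots, ∀ α ∈ P.Δ, P.corootMult β α ≤ P.corootMult h₂ α

/-- a simple root `α` is special if `m_{α^h}(α) = 1` -/
def IsSpecial (α : V) : Prop :=
  α ∈ P.Δ ∧ ∀ h : V, P.IsHighestRoot h → P.coord h α = 1

/-- a simple root `α` is co-special if `m^∨_{α^{h₂}}(α) = 1` -/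
def IsCospecial (α : V) : Prop :=
  α ∈ P.Δ ∧ ∀ h₂ : V, P.IsDualHighest h₂ → P.corootMult h₂ α = 1

/-- the reflection `s_β` in a root `β` (junk value `id` if `(β,β) = 0`) -/
noncomputable def refl (β : V) : V ≃ₗ[ℚ] V :=
  if h : P.B β β ≠ 0 then
    Module.reflection (x := β) (f := (2 / P.B β β) • P.B β)
      (by simp only [LinearMap.smul_apply, smul_eq_mul]; field_simp)
  else LinearEquiv.refl ℚ V

/-- the Weyl group `W`, as a group of linear automorphisms of `V` -/
noncomputable def weylGroup : Subgroup (V ≃ₗ[ℚ] V) :=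
  Subgroup.closure { g | ∃ β ∈ P.Φ, g = P.refl β }

/-- the Weyl group `W_α` of the maximal Levi determined by `α ∈ Δ`, generated by the
simple reflections `s_{α'}`, `α' ∈ Δ \ {α}` -/
noncomputable def leviWeyl (α : V) : Subgroup (V ≃ₗ[ℚ] V) :=
  Subgroup.closure { g | ∃ α' ∈ P.Δ, α' ≠ α ∧ g = P.refl α' }

/-- `v` is `Δ`-dominant -/
def IsDominant (v : V) : Prop := ∀ α ∈ P.Δ, 0 ≤ P.B v α

/-- `v` is `(Δ \ {α})`-dominant -/
def IsDominantAway (α v : V) : Prop := ∀ α' ∈ P.Δ, α' ≠ α → 0 ≤ P.B v α'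

/-- `χ` is quasi-constant -/
def IsQuasiConstant (χ : V) : Prop :=
  ∀ β ∈ P.Φ, P.B χ (P.coroot β) ≠ 0 → ∀ w ∈ P.weylGroup,
    P.B χ (w (P.coroot β)) / P.B χ (P.coroot β) ∈ ({-1, 0, 1} : Set ℚ)

end RootSystemBase

namespace RootSystemBase

variable {V : Type*} [AddCommGroup V] [Module ℚ V] (P : RootSystemBase V)

/-! ### Coordinates, positivity and reflections -/

lemma ne_zero {β : V} (hβ : β ∈ P.Φ) : β ≠ 0 := fun h => P.zero_notMem (h ▸ hβ)

lemma B_self_pos {β : V} (hβ : β ∈ P.Φ) : 0 < P.B β β := P.B_posdef β (P.ne_zero hβ)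

lemma eq_zero_of_B_self_nonpos {v : V} (h : P.B v v ≤ 0) : v = 0 := by
  by_contra hv
  exact absurd (P.B_posdef v hv) (not_lt.mpr h)

lemma eq_of_B_sub_nonpos {u v : V} (h : P.B u u + P.B v v ≤ 2 * P.B u v) : u = v := by
  refine sub_eq_zero.mp (P.eq_zero_of_B_self_nonpos ?_)
  simp only [map_sub, LinearMap.sub_apply]
  linarith [P.B_symm u v]

lemma coord_eq_of_sum {v : V} {c : V → ℚ} (h : v = ∑ a ∈ P.Δ, c a • a) {a : V} (ha : a ∈ P.Δ) :
    P.coord v a = c a := by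
  have key : ∑ x : {x : V // x ∈ P.Δ}, (P.coord v x.1 - c x.1) • x.1 = 0 := by
    rw [Finset.sum_coe_sort P.Δ (fun x => (P.coord v x - c x) • x)]
    simp only [sub_smul, Finset.sum_sub_distrib]
    rw [← h, ← P.coord_spec v, sub_self]
  exact sub_eq_zero.mp (Fintype.linearIndependent_iff.mp P.Δ_indep _ key ⟨a, ha⟩)

lemma coord_smul (c : ℚ) (v : V) {a : V} (ha : a ∈ P.Δ) :
    P.coord (c • v) a = c * P.coord v a := by
  refine P.coord_eq_of_sum (c := fun a => c * P.coord v a) ?_ ha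
  conv_lhs => rw [P.coord_spec v]
  simp only [Finset.smul_sum, smul_smul]

lemma coord_sub (u v : V) {a : V} (ha : a ∈ P.Δ) :
    P.coord (u - v) a = P.coord u a - P.coord v a := by
  refine P.coord_eq_of_sum (c := fun a => P.coord u a - P.coord v a) ?_ ha
  conv_lhs => rw [P.coord_spec u, P.coord_spec v]
  simp only [sub_smul, Finset.sum_sub_distrib]

lemma coord_neg (v : V) {a : V} (ha : a ∈ P.Δ) : P.coord (-v) a = -P.coord v a := by
  have := P.coord_smul (-1) v ha
  simpa using this

open Classical in
lemma coord_simple {a b : V} (ha : a ∈ P.Δ) (hb : b ∈ P.Δ) :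
    P.coord a b = if b = a then 1 else 0 := by
  refine P.coord_eq_of_sum (c := fun b => if b = a then 1 else 0) ?_ hb
  simp [ite_smul, ha]

lemma coord_self {a : V} (ha : a ∈ P.Δ) : P.coord a a = 1 := by
  simp [P.coord_simple ha ha]

lemma coord_sub_smul_self (v : V) (c : ℚ) {a : V} (ha : a ∈ P.Δ) :
    P.coord (v - c • a) a = P.coord v a - c := by
  rw [P.coord_sub _ _ ha, P.coord_smul _ _ ha, P.coord_self ha, mul_one]

lemma coord_sub_smul_of_ne (v : V) (c : ℚ) {a b : V} (ha : a ∈ P.Δ) (hb : b ∈ P.Δ) (h : b ≠ a) :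
    P.coord (v - c • a) b = P.coord v b := by
  rw [P.coord_sub _ _ hb, P.coord_smul _ _ hb, P.coord_simple ha hb, if_neg h]
  ring

lemma B_eq_sum (u v : V) : P.B u v = ∑ a ∈ P.Δ, P.coord u a * P.B a v := by
  conv_lhs => rw [P.coord_spec u]
  simp [map_sum, LinearMap.sum_apply]

/-- the height of a vector: the sum of its simple root coordinates -/
noncomputable def height (v : V) : ℚ := ∑ a ∈ P.Δ, P.coord v a

lemma height_sub_smul (v : V) (c : ℚ) {a : V} (ha : a ∈ P.Δ) :
    P.height (v - c • a) = P.height v - c := by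
  classical
  unfold height
  rw [← Finset.add_sum_erase _ _ ha, ← Finset.add_sum_erase P.Δ (P.coord v) ha,
    P.coord_sub_smul_self v c ha]
  rw [Finset.sum_congr rfl fun b hb => P.coord_sub_smul_of_ne v c ha (Finset.mem_of_mem_erase hb)
    (Finset.ne_of_mem_erase hb)]
  ring

lemma refl_apply {β : V} (hβ : β ∈ P.Φ) (v : V) :
    P.refl β v = v - (2 * P.B β v / P.B β β) • β := by
  rw [refl, dif_pos (P.B_self_pos hβ).ne', Module.reflection_apply]
  congr 2
  simp only [LinearMap.smul_apply, smul_eq_mul]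
  ring

lemma refl_mem {β γ : V} (hβ : β ∈ P.Φ) (hγ : γ ∈ P.Φ) : P.refl β γ ∈ P.Φ := by
  rw [P.refl_apply hβ]
  exact P.reflect_mem β hβ γ hγ

lemma refl_self {β : V} (hβ : β ∈ P.Φ) : P.refl β β = -β := by
  rw [P.refl_apply hβ, mul_div_assoc, div_self (P.B_self_pos hβ).ne']
  module

lemma neg_mem {β : V} (hβ : β ∈ P.Φ) : -β ∈ P.Φ :=
  P.refl_self hβ ▸ P.refl_mem hβ hβ

lemma B_refl {β : V} (hβ : β ∈ P.Φ) (u v : V) : P.B (P.refl β u) (P.refl β v) = P.B u v := by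
  have h := (P.B_self_pos hβ).ne'
  simp only [P.refl_apply hβ, map_sub, LinearMap.sub_apply, map_smul, LinearMap.smul_apply,
    smul_eq_mul]
  rw [P.B_symm u β]
  field_simp
  ring

lemma refl_refl {β : V} (hβ : β ∈ P.Φ) (v : V) : P.refl β (P.refl β v) = v := by
  have h := (P.B_self_pos hβ).ne'
  simp only [P.refl_apply hβ, map_sub, map_smul, smul_eq_mul]
  rw [sub_sub, ← add_smul]
  convert sub_zero v using 2
  convert zero_smul ℚ β using 2
  field_simp
  ring

lemma refl_mem_weylGroup {β : V} (hβ : β ∈ P.Φ) : P.refl β ∈ P.weylGroup :=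
  Subgroup.subset_closure ⟨β, hβ, rfl⟩

lemma weylGroup_B {w : V ≃ₗ[ℚ] V} (hw : w ∈ P.weylGroup) :
    ∀ u v : V, P.B (w u) (w v) = P.B u v := by
  induction hw using Subgroup.closure_induction with
  | mem g hg =>
    obtain ⟨β, hβ, rfl⟩ := hg
    exact P.B_refl hβ
  | one => intro u v; rfl
  | mul x y _ _ hx hy => intro u v; rw [LinearEquiv.mul_apply, LinearEquiv.mul_apply, hx, hy]
  | inv x _ hx =>
    intro u v
    rw [← hx (x⁻¹ u), ← LinearEquiv.mul_apply, ← LinearEquiv.mul_apply, mul_inv_cancel]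
    rfl

lemma weylGroup_mem {w : V ≃ₗ[ℚ] V} (hw : w ∈ P.weylGroup) : ∀ β ∈ P.Φ, w β ∈ P.Φ := by
  classical
  induction hw using Subgroup.closure_induction with
  | mem g hg =>
    obtain ⟨β, hβ, rfl⟩ := hg
    exact fun γ hγ => P.refl_mem hβ hγ
  | one => exact fun γ hγ => hγ
  | mul x y _ _ hx hy => exact fun γ hγ => hx _ (hy _ hγ)
  | inv x _ hx =>
    intro β hβ
    have himg : P.Φ.image x = P.Φ :=
      Finset.eq_of_subset_of_card_le (Finset.image_subset_iff.mpr hx)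
        (Finset.card_image_of_injective _ x.injective).ge
    obtain ⟨γ, hγ, rfl⟩ := Finset.mem_image.mp (himg.symm ▸ hβ)
    rw [← LinearEquiv.mul_apply, inv_mul_cancel]
    exact hγ

lemma closure_simple_le_weylGroup (p : V → Prop) :
    Subgroup.closure { g | ∃ a ∈ P.Δ, p a ∧ g = P.refl a } ≤ P.weylGroup :=
  Subgroup.closure_mono fun _ ⟨a, ha, _, h⟩ => ⟨a, P.Δ_sub ha, h⟩

lemma leviWeyl_le_weylGroup (α : V) : P.leviWeyl α ≤ P.weylGroup :=
  P.closure_simple_le_weylGroup (· ≠ α)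

lemma coord_leviWeyl {α : V} (hα : α ∈ P.Δ) {w : V ≃ₗ[ℚ] V} (hw : w ∈ P.leviWeyl α) :
    ∀ v : V, P.coord (w v) α = P.coord v α := by
  induction hw using Subgroup.closure_induction with
  | mem g hg =>
    obtain ⟨a, ha, hne, rfl⟩ := hg
    intro v
    rw [P.refl_apply (P.Δ_sub ha), P.coord_sub_smul_of_ne _ _ ha hα hne.symm]
  | one => intro v; rfl
  | mul x y _ _ hx hy => intro v; rw [LinearEquiv.mul_apply, hx, hy]
  | inv x _ hx =>
    intro v
    rw [← hx (x⁻¹ v), ← LinearEquiv.mul_apply, mul_inv_cancel]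
    rfl

/-- every root has a conjugate dominant for a given set of simple roots, under the group
generated by the corresponding reflections -/
lemma exists_dominant (p : V → Prop) {β : V} (hβ : β ∈ P.Φ) :
    ∃ w ∈ Subgroup.closure { g | ∃ a ∈ P.Δ, p a ∧ g = P.refl a },
      ∀ a ∈ P.Δ, p a → 0 ≤ P.B (w β) a := by
  classical
  set G := Subgroup.closure { g | ∃ a ∈ P.Δ, p a ∧ g = P.refl a } with hG
  obtain ⟨γ, hγ, hmax⟩ := (P.Φ.filter fun γ => ∃ w ∈ G, w β = γ).exists_max_image P.height
    ⟨β, Finset.mem_filter.mpr ⟨hβ, 1, one_mem _, rfl⟩⟩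
  obtain ⟨hγΦ, w, hw, rfl⟩ := Finset.mem_filter.mp hγ
  refine ⟨w, hw, fun a ha hp => ?_⟩
  by_contra! hneg
  have haΦ := P.Δ_sub ha
  have hlt := hmax (P.refl a (w β)) (Finset.mem_filter.mpr ⟨P.refl_mem haΦ hγΦ, P.refl a * w,
    mul_mem (Subgroup.subset_closure ⟨a, ha, hp, rfl⟩) hw, rfl⟩)
  rw [P.refl_apply haΦ, P.height_sub_smul _ _ ha, P.B_symm a] at hlt
  have : 2 * P.B (w β) a / P.B a a < 0 := div_neg_of_neg_of_pos (by linarith) (P.B_self_pos haΦ)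
  linarith

/-! ### Conjugacy and lengths of roots -/

/-- by irreducibility, any root is non-orthogonal to some conjugate of any other root -/
lemma exists_weylGroup_B_ne_zero {β γ : V} (hβ : β ∈ P.Φ) (hγ : γ ∈ P.Φ) :
    ∃ w ∈ P.weylGroup, P.B β (w γ) ≠ 0 := by
  classical
  by_contra! hcon
  have hall := P.irreducible (P.Φ.filter fun δ => ∀ w ∈ P.weylGroup, P.B δ (w γ) = 0)
    (Finset.filter_subset _ _) ⟨β, Finset.mem_filter.mpr ⟨hβ, hcon⟩⟩ (by
      intro δ hδ ε hε hεn
      have hδ2 := (Finset.mem_filter.mp hδ).2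
      obtain ⟨w, hw, hne⟩ : ∃ w ∈ P.weylGroup, P.B ε (w γ) ≠ 0 := by
        by_contra! h
        exact hεn (Finset.mem_filter.mpr ⟨hε, h⟩)
      have h1 := hδ2 (P.refl ε * w) (mul_mem (P.refl_mem_weylGroup hε) hw)
      rw [LinearEquiv.mul_apply, P.refl_apply hε, map_sub, hδ2 w hw, map_smul, smul_eq_mul,
        zero_sub, neg_eq_zero, mul_eq_zero] at h1
      refine h1.resolve_left (div_ne_zero (by simpa using hne) (P.B_self_pos hε).ne'))
  have hγ' := hγ
  rw [← hall] at hγ'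
  exact (P.B_self_pos hγ).ne' ((Finset.mem_filter.mp hγ').2 1 (one_mem _))

/-- the two Cartan integers of a pair of roots -/
lemma exists_cartan_integers {β γ : V} (hβ : β ∈ P.Φ) (hγ : γ ∈ P.Φ) :
    ∃ n m : ℤ, 2 * P.B β γ = n * P.B γ γ ∧ 2 * P.B β γ = m * P.B β β := by
  obtain ⟨n, hn⟩ := P.integral γ hγ β hβ
  obtain ⟨m, hm⟩ := P.integral β hβ γ hγ
  refine ⟨n, m, ?_, ?_⟩
  · rw [div_eq_iff (P.B_self_pos hγ).ne', P.B_symm] at hn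
    exact hn
  · rwa [div_eq_iff (P.B_self_pos hβ).ne'] at hm

lemma eq_or_eq_neg_or_mul_lt_four {β γ : V} (hβ : β ∈ P.Φ) (hγ : γ ∈ P.Φ) {n m : ℤ}
    (hn : 2 * P.B β γ = n * P.B γ γ) (hm : 2 * P.B β γ = m * P.B β β) :
    β = γ ∨ β = -γ ∨ n * m < 4 := by
  by_cases hv : β - ((n : ℚ) / 2) • γ = 0
  · have hβγ : ((n : ℚ) / 2) • γ = β := (sub_eq_zero.mp hv).symm
    rcases P.reduced γ hγ _ (hβγ.symm ▸ hβ) with h | h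
    · left; rw [← hβγ, h, one_smul]
    · right; left; rw [← hβγ, h, neg_one_smul]
  · right; right
    have hpos := P.B_posdef _ hv
    simp only [map_sub, map_smul, LinearMap.sub_apply, LinearMap.smul_apply, smul_eq_mul] at hpos
    rw [P.B_symm γ β] at hpos
    have hb := P.B_self_pos hβ
    have key : (n : ℚ) * m * P.B β β < 4 * P.B β β := by
      have e : (n : ℚ) * (2 * P.B β γ) = n * m * P.B β β := by rw [hm]; ring
      have e2 : (n : ℚ) * (2 * P.B β γ) = n * (n * P.B γ γ) := by rw [hn]
      nlinarith
    exact_mod_cast lt_of_mul_lt_mul_right key hb.le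

/-- roots of the same length are conjugate -/
lemma exists_weylGroup_apply_eq {β γ : V} (hβ : β ∈ P.Φ) (hγ : γ ∈ P.Φ)
    (hlen : P.B β β = P.B γ γ) : ∃ w ∈ P.weylGroup, w γ = β := by
  obtain ⟨w, hw, hne⟩ := P.exists_weylGroup_B_ne_zero hβ hγ
  suffices h : ∃ u ∈ P.weylGroup, u (w γ) = β by
    obtain ⟨u, hu, h⟩ := h
    exact ⟨u * w, mul_mem hu hw, h⟩
  have hδ := P.weylGroup_mem hw γ hγ
  rw [← P.weylGroup_B hw γ γ] at hlen
  generalize w γ = δ at hne hδ hlen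
  obtain ⟨n, m, hn, hm⟩ := P.exists_cartan_integers hβ hδ
  rcases P.eq_or_eq_neg_or_mul_lt_four hβ hδ hn hm with h | h | h
  · exact ⟨1, one_mem _, h.symm⟩
  · exact ⟨_, P.refl_mem_weylGroup hδ, by rw [P.refl_self hδ, h]⟩
  · have hb := P.B_self_pos hβ
    have hd := P.B_self_pos hδ
    have hnm : n = m := by
      rw [hn, ← hlen] at hm
      exact_mod_cast mul_right_cancel₀ hb.ne' hm
    subst hnm
    have hn0 : n ≠ 0 := by
      rintro rfl
      apply hne
      simpa using hn
    have hn1 : n = 1 ∨ n = -1 := by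
      have : n < 2 := by nlinarith
      have : -2 < n := by nlinarith
      omega
    have e1 : P.refl δ β = β - (n : ℚ) • δ := by
      rw [P.refl_apply hδ, P.B_symm, hn, mul_div_assoc, div_self hd.ne', mul_one]
    have e2 : P.refl β δ = δ - (n : ℚ) • β := by
      rw [P.refl_apply hβ, hm, mul_div_assoc, div_self hb.ne', mul_one]
    rcases hn1 with rfl | rfl
    · refine ⟨P.refl δ * P.refl β * P.refl δ, mul_mem (mul_mem (P.refl_mem_weylGroup hδ)
        (P.refl_mem_weylGroup hβ)) (P.refl_mem_weylGroup hδ), ?_⟩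
      simp only [LinearEquiv.mul_apply, P.refl_self hδ, map_neg, e2, map_sub, map_smul, e1]
      push_cast
      module
    · refine ⟨P.refl δ * P.refl β, mul_mem (P.refl_mem_weylGroup hδ)
        (P.refl_mem_weylGroup hβ), ?_⟩
      simp only [LinearEquiv.mul_apply, P.refl_self hδ, e2, map_sub, map_smul, e1]
      push_cast
      module

lemma length_ratio {β γ : V} (hβ : β ∈ P.Φ) (hγ : γ ∈ P.Φ) (hlt : P.B γ γ < P.B β β) :
    P.B β β = 2 * P.B γ γ ∨ P.B β β = 3 * P.B γ γ := by
  obtain ⟨w, hw, hne⟩ := P.exists_weylGroup_B_ne_zero hβ hγ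
  have hδ := P.weylGroup_mem hw γ hγ
  rw [← P.weylGroup_B hw γ γ] at hlt ⊢
  generalize w γ = δ at hne hδ hlt
  obtain ⟨n, m, hn, hm⟩ := P.exists_cartan_integers hβ hδ
  have hd := P.B_self_pos hδ
  rcases P.eq_or_eq_neg_or_mul_lt_four hβ hδ hn hm with rfl | rfl | h
  · exact absurd hlt (lt_irrefl _)
  · simp at hlt
  · have hm0 : m ≠ 0 := by
      rintro rfl
      apply hne
      simpa using hm
    have e : (n : ℚ) * P.B δ δ = m * P.B β β := by rw [← hn, ← hm]
    have hratio : ((n : ℚ) - m) * m > 0 := by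
      have : (m : ℚ) * m * (P.B β β - P.B δ δ) > 0 := by
        have : (0 : ℚ) < m * m := mul_self_pos.mpr (by exact_mod_cast hm0)
        exact mul_pos this (by linarith)
      have h2 : (m : ℚ) * m * (P.B β β - P.B δ δ) = ((n : ℚ) - m) * m * P.B δ δ := by
        linear_combination (-(m : ℚ)) * e
      rw [h2] at this
      exact pos_of_mul_pos_left this hd.le
    have hratio' : (n - m) * m > 0 := by exact_mod_cast hratio
    have hmm : m = 1 ∨ m = -1 := by
      have : m < 2 := by nlinarith
      have : -2 < m := by nlinarith
      omega
    rcases hmm with rfl | rfl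
    · have : n = 2 ∨ n = 3 := by omega
      rcases this with rfl | rfl
      · left; push_cast at e; linarith
      · right; push_cast at e; linarith
    · have : n = -2 ∨ n = -3 := by omega
      rcases this with rfl | rfl
      · left; push_cast at e; linarith
      · right; push_cast at e; linarith

lemma isLong_or_isShort {β : V} (hβ : β ∈ P.Φ) : P.IsLong β ∨ P.IsShort β := by
  by_contra! h
  simp only [IsLong, IsShort, not_forall, not_le] at h
  obtain ⟨⟨γ, hγ, h1⟩, ⟨δ, hδ, h2⟩⟩ := h
  have hd := P.B_self_pos hδ
  rcases P.length_ratio hγ hβ h1 with a | a <;> rcases P.length_ratio hβ hδ h2 with b | b <;>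
    rcases P.length_ratio hγ hδ (h2.trans h1) with c | c <;> linarith

/-! ### Induction over simple reflections -/

lemma B_simple_nonpos {a b : V} (ha : a ∈ P.Δ) (hb : b ∈ P.Δ) (h : a ≠ b) : P.B a b ≤ 0 := by
  by_contra! hpos
  have haΦ := P.Δ_sub ha
  have hc : 0 < 2 * P.B a b / P.B a a := div_pos (by linarith) (P.B_self_pos haΦ)
  have h1 := P.coord_sub_smul_self b (2 * P.B a b / P.B a a) ha
  have h2 := P.coord_sub_smul_of_ne b (2 * P.B a b / P.B a a) ha hb h.symm
  rw [P.coord_simple hb ha, if_neg h] at h1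
  rw [P.coord_self hb] at h2
  rcases P.pos_or_neg _ (P.reflect_mem a haΦ b (P.Δ_sub hb)) with h' | h'
  · linarith [h' a ha]
  · linarith [h' b hb]

lemma eq_of_coord_eq_zero_of_ne {β a : V} (hβ : β ∈ P.Φ) (ha : a ∈ P.Δ)
    (h0 : ∀ b ∈ P.Δ, b ≠ a → P.coord β b = 0) (hpos : 0 < P.coord β a) : β = a := by
  have h : β = P.coord β a • a := by
    conv_lhs => rw [P.coord_spec β]
    exact Finset.sum_eq_single_of_mem a ha fun b hb hne => by rw [h0 b hb hne, zero_smul]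
  rcases P.reduced a (P.Δ_sub ha) _ (h ▸ hβ) with h' | h'
  · rw [h, h', one_smul]
  · linarith

lemma induction_simple_of_pos {Q : V → Prop} (hΔ : ∀ a ∈ P.Δ, Q a)
    (hrefl : ∀ β ∈ P.Φ, ∀ a ∈ P.Δ, Q β → Q (P.refl a β)) {β : V} (hβ : β ∈ P.Φ)
    (hpos : ∀ a ∈ P.Δ, 0 ≤ P.coord β a) : Q β := by
  classical
  by_contra hQ
  obtain ⟨γ, hγ, hmin⟩ := (P.Φ.filter fun γ => (∀ a ∈ P.Δ, 0 ≤ P.coord γ a) ∧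
    ¬ Q γ).exists_min_image P.height ⟨β, Finset.mem_filter.mpr ⟨hβ, hpos, hQ⟩⟩
  obtain ⟨hγΦ, hγpos, hγQ⟩ := Finset.mem_filter.mp hγ
  obtain ⟨a, ha, hlt⟩ : ∃ a ∈ P.Δ, 0 < P.coord γ a * P.B a γ := by
    by_contra! h
    have := P.B_self_pos hγΦ
    rw [P.B_eq_sum] at this
    exact absurd this (not_lt.mpr (Finset.sum_nonpos h))
  have haΦ := P.Δ_sub ha
  have hBpos : 0 < P.B a γ := pos_of_mul_pos_right hlt (hγpos a ha)
  have hcpos : 0 < P.coord γ a := pos_of_mul_pos_left hlt hBpos.le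
  have hQ' : ¬ Q (P.refl a γ) := fun h =>
    hγQ (P.refl_refl haΦ γ ▸ hrefl _ (P.refl_mem haΦ hγΦ) a ha h)
  by_cases hp : ∀ b ∈ P.Δ, 0 ≤ P.coord (P.refl a γ) b
  · have hle := hmin _ (Finset.mem_filter.mpr ⟨P.refl_mem haΦ hγΦ, hp, hQ'⟩)
    rw [P.refl_apply haΦ, P.height_sub_smul _ _ ha] at hle
    have : 0 < 2 * P.B a γ / P.B a a := div_pos (by linarith) (P.B_self_pos haΦ)
    linarith
  · have hn := (P.pos_or_neg _ (P.refl_mem haΦ hγΦ)).resolve_left hp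
    have : γ = a := P.eq_of_coord_eq_zero_of_ne hγΦ ha (fun b hb hne => by
      have := hn b hb
      rw [P.refl_apply haΦ, P.coord_sub_smul_of_ne _ _ ha hb hne] at this
      exact le_antisymm this (hγpos b hb)) hcpos
    exact hγQ (this ▸ hΔ a ha)

/-- a property of simple roots preserved by simple reflections holds for all roots -/
lemma induction_simple {Q : V → Prop} (hΔ : ∀ a ∈ P.Δ, Q a)
    (hrefl : ∀ β ∈ P.Φ, ∀ a ∈ P.Δ, Q β → Q (P.refl a β)) {β : V} (hβ : β ∈ P.Φ) : Q β := by
  rcases P.pos_or_neg β hβ with h | h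
  · exact P.induction_simple_of_pos hΔ hrefl hβ h
  · rw [← neg_neg β]
    refine P.induction_simple_of_pos (Q := fun v => Q (-v)) (fun a ha => ?_)
      (fun γ hγ a ha hQ => ?_) (P.neg_mem hβ) (fun a ha => ?_)
    · rw [← P.refl_self (P.Δ_sub ha)]
      exact hrefl a (P.Δ_sub ha) a ha (hΔ a ha)
    · rw [← map_neg]
      exact hrefl _ (P.neg_mem hγ) a ha hQ
    · rw [P.coord_neg _ ha]
      linarith [h a ha]

/-- the Dynkin diagram of an irreducible root system is connected -/
lemma simple_connected (p : V → Prop) (hne : ∃ a ∈ P.Δ, p a)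
    (horth : ∀ a ∈ P.Δ, p a → ∀ b ∈ P.Δ, ¬ p b → P.B a b = 0) : ∀ a ∈ P.Δ, p a := by
  classical
  have hB : ∀ u v : V, (∀ a ∈ P.Δ, ¬ p a → P.coord u a = 0) →
      (∀ a ∈ P.Δ, p a → P.coord v a = 0) → P.B u v = 0 := by
    intro u v hu hv
    rw [P.B_eq_sum]
    refine Finset.sum_eq_zero fun a ha => ?_
    by_cases hpa : p a
    · rw [P.B_symm, P.B_eq_sum, Finset.sum_eq_zero, mul_zero]
      intro b hb
      by_cases hpb : p b
      · rw [hv b hb hpb, zero_mul]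
      · rw [P.B_symm, horth a ha hpa b hb hpb, mul_zero]
    · rw [hu a ha hpa, zero_mul]
  have hsimple : ∀ a ∈ P.Δ, ∀ b ∈ P.Δ, (p a ↔ ¬ p b) → P.coord a b = 0 := by
    intro a ha b hb h
    rw [P.coord_simple ha hb, if_neg]
    rintro rfl
    tauto
  have hsplit : ∀ β ∈ P.Φ, (∀ a ∈ P.Δ, ¬ p a → P.coord β a = 0) ∨
      (∀ a ∈ P.Δ, p a → P.coord β a = 0) := by
    intro β hβ
    refine P.induction_simple (Q := fun β => (∀ a ∈ P.Δ, ¬ p a → P.coord β a = 0) ∨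
      (∀ a ∈ P.Δ, p a → P.coord β a = 0)) (fun a ha => ?_) (fun γ hγ a ha hQ => ?_) hβ
    · by_cases hpa : p a
      · exact Or.inl fun b hb hpb => hsimple a ha b hb (by tauto)
      · exact Or.inr fun b hb hpb => hsimple a ha b hb (by tauto)
    · rw [P.refl_apply (P.Δ_sub ha)]
      by_cases hpa : p a <;> rcases hQ with hQ | hQ
      · exact Or.inl fun b hb hpb => by
          rw [P.coord_sub_smul_of_ne _ _ ha hb (by rintro rfl; exact hpb hpa), hQ b hb hpb]
      · rw [hB a γ (fun b hb hpb => hsimple a ha b hb (by tauto)) hQ]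
        simpa using Or.inr hQ
      · rw [P.B_symm, hB γ a hQ (fun b hb hpb => hsimple a ha b hb (by tauto))]
        simpa using Or.inl hQ
      · exact Or.inr fun b hb hpb => by
          rw [P.coord_sub_smul_of_ne _ _ ha hb (by rintro rfl; exact hpa hpb), hQ b hb hpb]
  obtain ⟨a₀, ha₀, hpa₀⟩ := hne
  have hall := P.irreducible (P.Φ.filter fun β => ∀ a ∈ P.Δ, ¬ p a → P.coord β a = 0)
    (Finset.filter_subset _ _) ⟨a₀, Finset.mem_filter.mpr ⟨P.Δ_sub ha₀, fun b hb hpb =>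
      hsimple a₀ ha₀ b hb (by tauto)⟩⟩ (by
      intro β hβ γ hγ hγn
      have hγ' := (hsplit γ hγ).resolve_left fun h => hγn (Finset.mem_filter.mpr ⟨hγ, h⟩)
      exact hB β γ (Finset.mem_filter.mp hβ).2 hγ')
  intro a ha
  by_contra hpa
  have haΦ := P.Δ_sub ha
  rw [← hall] at haΦ
  have := (Finset.mem_filter.mp haΦ).2 a ha hpa
  rw [P.coord_self ha] at this
  exact one_ne_zero this

/-! ### The highest root -/

lemma mem_posRoots {β : V} : β ∈ P.posRoots ↔ β ∈ P.Φ ∧ ∀ a ∈ P.Δ, 0 ≤ P.coord β a :=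
  Finset.mem_filter

lemma simple_mem_posRoots {a : V} (ha : a ∈ P.Δ) : a ∈ P.posRoots :=
  P.mem_posRoots.mpr ⟨P.Δ_sub ha, fun b hb => by
    classical
    rw [P.coord_simple ha hb]
    split_ifs <;> norm_num⟩

lemma B_mono {u v x : V} (hx : P.IsDominant x) (h : ∀ a ∈ P.Δ, P.coord u a ≤ P.coord v a) :
    P.B u x ≤ P.B v x := by
  rw [P.B_eq_sum u, P.B_eq_sum v]
  exact Finset.sum_le_sum fun a ha =>
    mul_le_mul_of_nonneg_right (h a ha) (P.B_symm x a ▸ hx a ha)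

lemma mem_posRoots_of_isDominant {β : V} (hβ : β ∈ P.Φ) (hd : P.IsDominant β) :
    β ∈ P.posRoots := by
  refine P.mem_posRoots.mpr ⟨hβ, (P.pos_or_neg β hβ).resolve_right fun h => ?_⟩
  have := P.B_self_pos hβ
  rw [P.B_eq_sum] at this
  exact absurd this (not_lt.mpr (Finset.sum_nonpos fun a ha =>
    mul_nonpos_of_nonpos_of_nonneg (h a ha) (P.B_symm β a ▸ hd a ha)))

lemma sub_mem_of_B_pos {β γ : V} (hβ : β ∈ P.Φ) (hγ : γ ∈ P.Φ) (hne : β ≠ γ)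
    (hpos : 0 < P.B β γ) : β - γ ∈ P.Φ := by
  obtain ⟨n, m, hn, hm⟩ := P.exists_cartan_integers hβ hγ
  have hb := P.B_self_pos hβ
  have hg := P.B_self_pos hγ
  have hn0 : 0 < n := by
    have : (0 : ℚ) < n := pos_of_mul_pos_left (by linarith : 0 < (n : ℚ) * P.B γ γ) hg.le
    exact_mod_cast this
  have hm0 : 0 < m := by
    have : (0 : ℚ) < m := pos_of_mul_pos_left (by linarith : 0 < (m : ℚ) * P.B β β) hb.le
    exact_mod_cast this
  by_cases h1 : n = 1
  · have := P.refl_mem hγ hβ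
    rwa [P.refl_apply hγ, P.B_symm, hn, h1, mul_div_assoc, div_self hg.ne', Int.cast_one, mul_one,
      one_smul] at this
  by_cases h2 : m = 1
  · have := P.neg_mem (P.refl_mem hβ hγ)
    rwa [P.refl_apply hβ, hm, h2, mul_div_assoc, div_self hb.ne', Int.cast_one, mul_one,
      one_smul, neg_sub] at this
  refine absurd (P.eq_of_B_sub_nonpos ?_) hne
  have hn2 : (2 : ℚ) ≤ n := by exact_mod_cast (by omega : 2 ≤ n)
  have hm2 : (2 : ℚ) ≤ m := by exact_mod_cast (by omega : 2 ≤ m)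
  nlinarith

/-- a root that cannot be raised by a simple reflection is dominant -/
lemma isDominant_of_forall_height_le {β : V} (hβ : β ∈ P.Φ)
    (hmax : ∀ γ ∈ P.Φ, (∀ a ∈ P.Δ, P.coord β a ≤ P.coord γ a) → P.height γ ≤ P.height β) :
    P.IsDominant β := by
  classical
  intro a ha
  by_contra! hneg
  have haΦ := P.Δ_sub ha
  have hlt : 2 * P.B a β / P.B a a < 0 :=
    div_neg_of_neg_of_pos (by linarith [P.B_symm a β]) (P.B_self_pos haΦ)
  have := hmax _ (P.refl_mem haΦ hβ) (fun b hb => by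
    rw [P.refl_apply haΦ]
    by_cases hba : b = a
    · rw [hba, P.coord_sub_smul_self _ _ ha]
      linarith
    · rw [P.coord_sub_smul_of_ne _ _ ha hb hba])
  rw [P.refl_apply haΦ, P.height_sub_smul _ _ ha] at this
  linarith

lemma coord_pos_of_isDominant {h : V} (hh : h ∈ P.Φ) (hd : P.IsDominant h) :
    ∀ a ∈ P.Δ, 0 < P.coord h a := by
  have hpos := (P.mem_posRoots.mp (P.mem_posRoots_of_isDominant hh hd)).2
  refine P.simple_connected (fun a => 0 < P.coord h a) ?_ ?_
  · by_contra! hcon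
    have := P.B_self_pos hh
    rw [P.B_eq_sum, Finset.sum_eq_zero fun a ha => by
      rw [le_antisymm (hcon a ha) (hpos a ha), zero_mul]] at this
    exact lt_irrefl _ this
  · intro a ha hpa b hb hpb
    have hterm : ∀ c ∈ P.Δ, P.coord h c * P.B c b ≤ 0 := by
      intro c hc
      by_cases hcb : c = b
      · rw [hcb, le_antisymm (not_lt.mp hpb) (hpos b hb), zero_mul]
      · exact mul_nonpos_of_nonneg_of_nonpos (hpos c hc) (P.B_simple_nonpos hc hb hcb)
    have hsum := hd b hb
    rw [P.B_eq_sum] at hsum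
    have hzero := (Finset.sum_eq_zero_iff_of_nonpos hterm).mp
      (le_antisymm (Finset.sum_nonpos hterm) hsum) a ha
    exact (mul_eq_zero.mp hzero).resolve_left hpa.ne'

lemma B_pos_of_isDominant {h y : V} (hh : h ∈ P.Φ) (hhd : P.IsDominant h) (hy : y ∈ P.Φ)
    (hyd : P.IsDominant y) : 0 < P.B h y := by
  have hpos := P.coord_pos_of_isDominant hh hhd
  have hterm : ∀ a ∈ P.Δ, 0 ≤ P.coord h a * P.B a y := fun a ha =>
    mul_nonneg (hpos a ha).le (P.B_symm y a ▸ hyd a ha)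
  rw [P.B_eq_sum]
  refine lt_of_le_of_ne (Finset.sum_nonneg hterm) fun hzero => ?_
  have hz := (Finset.sum_eq_zero_iff_of_nonneg hterm).mp hzero.symm
  have := P.B_self_pos hy
  rw [P.B_eq_sum, Finset.sum_eq_zero fun a ha => by
    rw [(mul_eq_zero.mp (hz a ha)).resolve_left (hpos a ha).ne', mul_zero]] at this
  exact lt_irrefl _ this

lemma exists_isHighestRoot (hne : P.Φ.Nonempty) : ∃ h, P.IsHighestRoot h := by
  classical
  obtain ⟨h, hh, hmax⟩ := P.Φ.exists_max_image P.height hne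
  have hhd := P.isDominant_of_forall_height_le hh fun γ hγ _ => hmax γ hγ
  refine ⟨h, hh, fun β hβ => ?_⟩
  obtain ⟨y, hy, hymax⟩ := (P.Φ.filter fun y => ∀ a ∈ P.Δ, P.coord β a ≤
    P.coord y a).exists_max_image P.height
    ⟨β, Finset.mem_filter.mpr ⟨(P.mem_posRoots.mp hβ).1, fun _ _ => le_rfl⟩⟩
  obtain ⟨hyΦ, hyβ⟩ := Finset.mem_filter.mp hy
  have hyd := P.isDominant_of_forall_height_le hyΦ fun γ hγ hle => hymax γ
    (Finset.mem_filter.mpr ⟨hγ, fun a ha => (hyβ a ha).trans (hle a ha)⟩)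
  intro a ha
  refine (hyβ a ha).trans ?_
  by_cases hhy : h = y
  · rw [hhy]
  have hsub := P.sub_mem_of_B_pos hh hyΦ hhy (P.B_pos_of_isDominant hh hhd hyΦ hyd)
  rcases P.pos_or_neg _ hsub with hp | hn
  · have := hp a ha
    rw [P.coord_sub _ _ ha] at this
    linarith
  · have heq : ∀ b ∈ P.Δ, P.coord h b = P.coord y b := by
      have hle : ∀ b ∈ P.Δ, P.coord h b ≤ P.coord y b := fun b hb => by
        have := hn b hb
        rw [P.coord_sub _ _ hb] at this
        linarith
      exact (Finset.sum_eq_sum_iff_of_le hle).mp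
        (le_antisymm (Finset.sum_le_sum hle) (hmax y hyΦ))
    exact (heq a ha).ge

variable {P}

lemma IsHighestRoot.mem_posRoots {h : V} (hh : P.IsHighestRoot h) {a : V} (ha : a ∈ P.Δ) :
    h ∈ P.posRoots := by
  refine P.mem_posRoots.mpr ⟨hh.1, (P.pos_or_neg h hh.1).resolve_right fun hn => ?_⟩
  have := hh.2 a (P.simple_mem_posRoots ha) a ha
  rw [P.coord_self ha] at this
  linarith [hn a ha]

lemma IsHighestRoot.B_self_le {h : V} (hh : P.IsHighestRoot h) {θ : V} (hθ : θ ∈ P.Φ)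
    (hd : P.IsDominant θ) : P.B θ θ ≤ P.B h θ :=
  P.B_mono hd (hh.2 θ (P.mem_posRoots_of_isDominant hθ hd))

lemma IsHighestRoot.isLong {h : V} (hh : P.IsHighestRoot h) : P.IsLong h := by
  intro γ hγ
  obtain ⟨w, hw, hdom⟩ := P.exists_dominant (fun _ => True) hγ
  have hw' := P.closure_simple_le_weylGroup _ hw
  have h1 := hh.B_self_le (P.weylGroup_mem hw' γ hγ) (fun a ha => hdom a ha trivial)
  rw [← P.weylGroup_B hw' γ γ]
  by_contra! hlt
  have := P.eq_of_B_sub_nonpos (u := h) (v := w γ) (by linarith)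
  rw [this] at hlt
  exact lt_irrefl _ hlt

lemma IsHighestRoot.eq_of_isDominant {h : V} (hh : P.IsHighestRoot h) {θ : V} (hθ : θ ∈ P.Φ)
    (hd : P.IsDominant θ) (hlen : P.IsLong θ) : h = θ :=
  P.eq_of_B_sub_nonpos (by linarith [hh.B_self_le hθ hd, hlen h hh.1])

lemma IsSpecial.abs_coord_le_one {α : V} (hs : P.IsSpecial α) {β : V} (hβ : β ∈ P.Φ) :
    |P.coord β α| ≤ 1 := by
  obtain ⟨h, hh⟩ := P.exists_isHighestRoot ⟨β, hβ⟩
  have h1 := hs.2 h hh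
  have hp : ∀ γ ∈ P.posRoots, |P.coord γ α| ≤ 1 := fun γ hγ => by
    rw [abs_of_nonneg ((P.mem_posRoots.mp hγ).2 α hs.1), ← h1]
    exact hh.2 γ hγ α hs.1
  rcases P.pos_or_neg β hβ with h | h
  · exact hp β (P.mem_posRoots.mpr ⟨hβ, h⟩)
  · rw [← abs_neg, ← P.coord_neg _ hs.1]
    exact hp _ (P.mem_posRoots.mpr ⟨P.neg_mem hβ, fun a ha => by
      rw [P.coord_neg _ ha]; linarith [h a ha]⟩)

lemma IsSpecial.coord_mem {α : V} (hs : P.IsSpecial α) {β : V} (hβ : β ∈ P.Φ) :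
    P.coord β α = -1 ∨ P.coord β α = 0 ∨ P.coord β α = 1 := by
  obtain ⟨n, hn⟩ := P.coord_int β hβ α hs.1
  have := hs.abs_coord_le_one hβ
  rw [hn] at this ⊢
  have h2 : |n| ≤ 1 := by exact_mod_cast this
  rw [abs_le] at h2
  have h3 : n = -1 ∨ n = 0 ∨ n = 1 := by omega
  rcases h3 with rfl | rfl | rfl <;> simp

lemma IsSpecial.exists_leviWeyl_isDominant {α : V} (hs : P.IsSpecial α) :
    ∃ w ∈ P.leviWeyl α, P.IsDominant (w α) := by
  classical
  have hαΦ := P.Δ_sub hs.1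
  obtain ⟨w, hw, hdom⟩ := P.exists_dominant (· ≠ α) hαΦ
  refine ⟨w, hw, fun a ha => ?_⟩
  by_cases haα : a = α
  · rw [haα]
    by_contra! hneg
    have hwα := P.weylGroup_mem (P.leviWeyl_le_weylGroup α hw) α hαΦ
    have hle := (abs_le.mp (hs.abs_coord_le_one (P.refl_mem hαΦ hwα))).2
    rw [P.refl_apply hαΦ, P.coord_sub_smul_self _ _ hs.1, P.coord_leviWeyl hs.1 hw,
      P.coord_self hs.1] at hle
    have : 2 * P.B α (w α) / P.B α α < 0 :=
      div_neg_of_neg_of_pos (by linarith [P.B_symm α (w α)]) (P.B_self_pos hαΦ)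
    linarith
  · exact hdom a ha haα

lemma isSpecial_of_leviWeyl_isDominant {α : V} (hα : α ∈ P.Δ) (hlong : P.IsLong α)
    (hex : ∃ w ∈ P.leviWeyl α, P.IsDominant (w α)) : P.IsSpecial α := by
  obtain ⟨w, hw, hd⟩ := hex
  have hwW := P.leviWeyl_le_weylGroup α hw
  refine ⟨hα, fun h hh => ?_⟩
  rw [hh.eq_of_isDominant (P.weylGroup_mem hwW α (P.Δ_sub hα)) hd
    (fun γ hγ => by rw [P.weylGroup_B hwW]; exact hlong γ hγ), P.coord_leviWeyl hα hw,
    P.coord_self hα]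

variable (P)

/-! ### The dual root system -/

lemma B_coroot_right (u β : V) : P.B u (P.coroot β) = 2 / P.B β β * P.B u β := by
  simp [coroot]

lemma B_coroot_left (β u : V) : P.B (P.coroot β) u = 2 / P.B β β * P.B β u := by
  simp [coroot]

lemma coroot_coroot (β : V) : P.coroot (P.coroot β) = β := by
  by_cases hβ : β = 0
  · simp [hβ, coroot]
  · have h := (P.B_posdef β hβ).ne'
    rw [coroot, P.B_coroot_left, P.B_coroot_right, coroot, smul_smul]
    convert one_smul ℚ β using 2
    field_simp

lemma coroot_injective : Function.Injective P.coroot :=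
  Function.LeftInverse.injective P.coroot_coroot

lemma B_coroot_self {β : V} (hβ : β ∈ P.Φ) :
    P.B (P.coroot β) (P.coroot β) = 4 / P.B β β := by
  have h := (P.B_self_pos hβ).ne'
  rw [P.B_coroot_left, P.B_coroot_right]
  field_simp
  norm_num

lemma coroot_weylGroup {w : V ≃ₗ[ℚ] V} (hw : w ∈ P.weylGroup) (β : V) :
    P.coroot (w β) = w (P.coroot β) := by
  rw [coroot, coroot, P.weylGroup_B hw, map_smul]

lemma corootMult_eq (β : V) {a : V} (ha : a ∈ P.Δ) :
    P.corootMult β a = P.coord β a * (P.B a a / P.B β β) := by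
  rw [corootMult, coroot, P.coord_smul _ _ ha]
  ring

lemma corootMult_int {β : V} (hβ : β ∈ P.Φ) :
    ∀ a ∈ P.Δ, ∃ n : ℤ, P.corootMult β a = n := by
  classical
  refine P.induction_simple (Q := fun β => ∀ a ∈ P.Δ, ∃ n : ℤ, P.corootMult β a = n)
    (fun b hb a ha => ?_) (fun γ hγ b hb hQ a ha => ?_) hβ
  · rw [P.corootMult_eq _ ha, P.coord_simple hb ha]
    by_cases hab : a = b
    · exact ⟨1, by rw [if_pos hab, hab, div_self (P.B_self_pos (P.Δ_sub hb)).ne']; norm_num⟩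
    · exact ⟨0, by simp [hab]⟩
  · have hbΦ := P.Δ_sub hb
    have hlen := P.B_refl hbΦ γ γ
    have hbb := (P.B_self_pos hbΦ).ne'
    obtain ⟨n, hn⟩ := hQ a ha
    rw [P.corootMult_eq _ ha] at hn ⊢
    rw [hlen, P.refl_apply hbΦ]
    by_cases hab : a = b
    · subst hab
      obtain ⟨k, hk⟩ := P.integral γ hγ a hbΦ
      refine ⟨n - k, ?_⟩
      rw [P.coord_sub_smul_self _ _ ha, sub_mul, hn]
      push_cast
      rw [← hk, P.B_symm γ a]
      field_simp
    · exact ⟨n, by rw [P.coord_sub_smul_of_ne _ _ hb ha hab, hn]⟩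

lemma corootMult_nonneg_iff {β : V} (hβ : β ∈ P.Φ) {a : V} (ha : a ∈ P.Δ) :
    0 ≤ P.corootMult β a ↔ 0 ≤ P.coord β a := by
  rw [P.corootMult_eq _ ha]
  exact mul_nonneg_iff_of_pos_right (div_pos (P.B_self_pos (P.Δ_sub ha)) (P.B_self_pos hβ))

open Classical in
/-- the dual root system, with the same bilinear form -/
noncomputable def dual : RootSystemBase V where
  B := P.B
  B_symm := P.B_symm
  B_posdef := P.B_posdef
  Φ := P.Φ.image P.coroot
  zero_notMem := by
    intro h
    obtain ⟨β, hβ, h0⟩ := Finset.mem_image.mp h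
    have := P.coroot_coroot β
    rw [h0] at this
    exact P.ne_zero hβ (by rw [← this]; simp [coroot])
  span_top := by
    rw [eq_top_iff, ← P.span_top, Submodule.span_le]
    intro β hβ
    rw [← P.coroot_coroot β]
    exact Submodule.smul_mem _ _ (Submodule.subset_span
      (Finset.mem_coe.mpr (Finset.mem_image_of_mem _ hβ)))
  reflect_mem := by
    intro x hx y hy
    obtain ⟨β, hβ, rfl⟩ := Finset.mem_image.mp hx
    obtain ⟨γ, hγ, rfl⟩ := Finset.mem_image.mp hy
    refine Finset.mem_image.mpr ⟨P.refl β γ, P.refl_mem hβ hγ, ?_⟩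
    have h := (P.B_self_pos hβ).ne'
    rw [P.coroot_weylGroup (P.refl_mem_weylGroup hβ), P.refl_apply hβ, P.B_coroot_self hβ,
      P.B_coroot_left β, coroot, coroot, smul_smul]
    congr 2
    field_simp
    ring
  integral := by
    intro x hx y hy
    obtain ⟨β, hβ, rfl⟩ := Finset.mem_image.mp hx
    obtain ⟨γ, hγ, rfl⟩ := Finset.mem_image.mp hy
    obtain ⟨n, hn⟩ := P.integral γ hγ β hβ
    refine ⟨n, ?_⟩
    have h := (P.B_self_pos hβ).ne'
    rw [← hn, P.B_coroot_self hβ, P.B_coroot_left β, P.B_coroot_right, P.B_symm γ β]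
    field_simp
    ring
  reduced := by
    intro x hx c hc
    obtain ⟨β, hβ, rfl⟩ := Finset.mem_image.mp hx
    obtain ⟨γ, hγ, hγc⟩ := Finset.mem_image.mp hc
    have hb := (P.B_self_pos hβ).ne'
    have hg := (P.B_self_pos hγ).ne'
    rw [coroot, coroot, smul_smul] at hγc
    have hγβ : γ = (P.B γ γ / 2 * (c * (2 / P.B β β))) • β := by
      rw [mul_smul, ← hγc, smul_smul]
      convert (one_smul ℚ γ).symm using 2
      field_simp
    have hlen : P.B γ γ = P.B β β := by
      rcases P.reduced β hβ _ (hγβ ▸ hγ) with h | h <;> rw [h] at hγβ <;> rw [hγβ] <;> simp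
    have hcc : P.B γ γ / 2 * (c * (2 / P.B β β)) = c := by
      rw [hlen]
      field_simp
    rw [hcc] at hγβ
    exact P.reduced β hβ c (hγβ ▸ hγ)
  irreducible := by
    intro s hs hne horth
    have hst : ∀ x ∈ s, ∃ β ∈ P.Φ, P.coroot β = x := fun x hx => Finset.mem_image.mp (hs hx)
    have hall := P.irreducible (P.Φ.filter fun β => P.coroot β ∈ s) (Finset.filter_subset _ _)
      (by
        obtain ⟨x, hx⟩ := hne
        obtain ⟨β, hβ, rfl⟩ := hst x hx
        exact ⟨β, Finset.mem_filter.mpr ⟨hβ, hx⟩⟩)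
      (by
        intro β hβ γ hγ hγn
        obtain ⟨hβΦ, hβs⟩ := Finset.mem_filter.mp hβ
        have := horth _ hβs _ (Finset.mem_image_of_mem _ hγ)
          fun h => hγn (Finset.mem_filter.mpr ⟨hγ, h⟩)
        rw [P.B_coroot_left, P.B_coroot_right] at this
        have h1 := (P.B_self_pos hβΦ).ne'
        have h2 := (P.B_self_pos hγ).ne'
        simpa [h1, h2] using this)
    refine Finset.Subset.antisymm hs fun x hx => ?_
    obtain ⟨β, hβ, rfl⟩ := Finset.mem_image.mp hx
    rw [← hall] at hβ
    exact (Finset.mem_filter.mp hβ).2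
  Δ := P.Δ.image P.coroot
  Δ_sub := Finset.image_subset_image P.Δ_sub
  Δ_indep := by
    have key : LinearIndependent ℚ fun x : {x : V // x ∈ P.Δ} => P.coroot x.1 :=
      P.Δ_indep.units_smul fun x => Units.mk0 (2 / P.B x.1 x.1)
        (div_ne_zero two_ne_zero (P.B_self_pos (P.Δ_sub x.2)).ne')
    have hmem : ∀ x : {x : V // x ∈ P.Δ.image P.coroot}, P.coroot x.1 ∈ P.Δ := by
      rintro ⟨x, hx⟩
      obtain ⟨a, ha, rfl⟩ := Finset.mem_image.mp hx
      rwa [P.coroot_coroot]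
    convert key.comp (fun x : {x : V // x ∈ P.Δ.image P.coroot} => ⟨P.coroot x.1, hmem x⟩)
      (fun x y hxy => Subtype.ext (P.coroot_injective (Subtype.mk.inj hxy))) using 1
    ext x
    exact (P.coroot_coroot x.1).symm
  coord v x := P.coord v (P.coroot x) * (P.B (P.coroot x) (P.coroot x) / 2)
  coord_spec := by
    intro v
    rw [Finset.sum_image P.coroot_injective.injOn]
    conv_lhs => rw [P.coord_spec v]
    refine Finset.sum_congr rfl fun a ha => ?_
    have h := (P.B_self_pos (P.Δ_sub ha)).ne'
    rw [P.coroot_coroot, coroot, smul_smul]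
    congr 1
    field_simp
  coord_int := by
    intro x hx y hy
    obtain ⟨β, hβ, rfl⟩ := Finset.mem_image.mp hx
    obtain ⟨a, ha, rfl⟩ := Finset.mem_image.mp hy
    rw [P.coroot_coroot]
    exact P.corootMult_int hβ a ha
  pos_or_neg := by
    intro x hx
    obtain ⟨β, hβ, rfl⟩ := Finset.mem_image.mp hx
    have hpos : ∀ a ∈ P.Δ, 0 ≤ P.B a a / P.B β β := fun a ha =>
      (div_pos (P.B_self_pos (P.Δ_sub ha)) (P.B_self_pos hβ)).le
    have heq : ∀ a ∈ P.Δ, P.coord (P.coroot β) a * (P.B a a / 2) =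
        P.coord β a * (P.B a a / P.B β β) := fun a ha => P.corootMult_eq β ha
    refine (P.pos_or_neg β hβ).imp (fun h y hy => ?_) (fun h y hy => ?_)
    · obtain ⟨a, ha, rfl⟩ := Finset.mem_image.mp hy
      rw [P.coroot_coroot, heq a ha]
      exact mul_nonneg (h a ha) (hpos a ha)
    · obtain ⟨a, ha, rfl⟩ := Finset.mem_image.mp hy
      rw [P.coroot_coroot, heq a ha]
      exact mul_nonpos_of_nonpos_of_nonneg (h a ha) (hpos a ha)

lemma coroot_mem_dual {β : V} : P.coroot β ∈ P.dual.Φ ↔ β ∈ P.Φ := by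
  classical exact P.coroot_injective.mem_finset_image

lemma coroot_mem_dual_simple {a : V} : P.coroot a ∈ P.dual.Δ ↔ a ∈ P.Δ := by
  classical exact P.coroot_injective.mem_finset_image

lemma dual_coord (β a : V) : P.dual.coord (P.coroot β) (P.coroot a) = P.corootMult β a := by
  change P.coord _ (P.coroot (P.coroot a)) * _ = _
  rw [P.coroot_coroot, corootMult]

lemma forall_mem_dual_simple {p : V → Prop} :
    (∀ x ∈ P.dual.Δ, p x) ↔ ∀ a ∈ P.Δ, p (P.coroot a) := by
  classical exact Finset.forall_mem_image

lemma forall_mem_dual {p : V → Prop} : (∀ x ∈ P.dual.Φ, p x) ↔ ∀ β ∈ P.Φ, p (P.coroot β) := by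
  classical exact Finset.forall_mem_image

lemma coroot_mem_dual_posRoots {β : V} : P.coroot β ∈ P.dual.posRoots ↔ β ∈ P.posRoots := by
  rw [mem_posRoots, mem_posRoots, P.coroot_mem_dual, P.forall_mem_dual_simple]
  refine and_congr_right fun hβ => forall₂_congr fun a ha => ?_
  rw [P.dual_coord, P.corootMult_nonneg_iff hβ ha]

lemma dual_isHighestRoot {h : V} : P.dual.IsHighestRoot (P.coroot h) ↔ P.IsDualHighest h := by
  refine and_congr P.coroot_mem_dual ?_
  simp only [P.forall_mem_dual_simple, P.dual_coord]
  constructor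
  · intro H β hβ a ha
    have := H (P.coroot β) (P.coroot_mem_dual_posRoots.mpr hβ) a ha
    rwa [P.dual_coord] at this
  · intro H x hx a ha
    rw [← P.coroot_coroot x] at hx ⊢
    rw [P.dual_coord]
    exact H _ (P.coroot_mem_dual_posRoots.mp hx) a ha

lemma dual_isSpecial {α : V} : P.dual.IsSpecial (P.coroot α) ↔ P.IsCospecial α := by
  refine and_congr P.coroot_mem_dual_simple ?_
  constructor
  · intro H h hh
    rw [← P.dual_coord]
    exact H _ (P.dual_isHighestRoot.mpr hh)
  · intro H x hx
    rw [← P.coroot_coroot x] at hx ⊢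
    rw [P.dual_coord]
    exact H _ (P.dual_isHighestRoot.mp hx)

lemma dual_isLong {β : V} (hβ : β ∈ P.Φ) : P.dual.IsLong (P.coroot β) ↔ P.IsShort β := by
  rw [IsLong, P.forall_mem_dual]
  refine forall₂_congr fun γ hγ => ?_
  change P.B _ _ ≤ P.B _ _ ↔ _
  rw [P.B_coroot_self hβ, P.B_coroot_self hγ]
  exact div_le_div_iff_of_pos_left (by norm_num) (P.B_self_pos hγ) (P.B_self_pos hβ)

lemma dual_refl {β : V} (hβ : β ∈ P.Φ) : P.dual.refl (P.coroot β) = P.refl β := by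
  have h := (P.B_self_pos hβ).ne'
  ext v
  rw [P.dual.refl_apply (P.coroot_mem_dual.mpr hβ), P.refl_apply hβ]
  change v - (2 * P.B _ _ / P.B _ _) • _ = _
  rw [P.B_coroot_self hβ, P.B_coroot_left, coroot, smul_smul]
  congr 2
  field_simp
  ring

lemma dual_leviWeyl (α : V) : P.dual.leviWeyl (P.coroot α) = P.leviWeyl α := by
  unfold leviWeyl
  congr 1
  ext g
  constructor
  · rintro ⟨x, hx, hne, rfl⟩
    rw [← P.coroot_coroot x] at hx hne ⊢
    have hx' := P.coroot_mem_dual_simple.mp hx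
    exact ⟨_, hx', fun h => hne (by rw [h]), P.dual_refl (P.Δ_sub hx')⟩
  · rintro ⟨a, ha, hne, rfl⟩
    exact ⟨_, P.coroot_mem_dual_simple.mpr ha, fun h => hne (P.coroot_injective h),
      (P.dual_refl (P.Δ_sub ha)).symm⟩

lemma dual_isDominant {β : V} (hβ : β ∈ P.Φ) :
    P.dual.IsDominant (P.coroot β) ↔ P.IsDominant β := by
  rw [IsDominant, P.forall_mem_dual_simple]
  refine forall₂_congr fun a ha => ?_
  change 0 ≤ P.B _ _ ↔ _
  rw [P.B_coroot_left, P.B_coroot_right,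
    mul_nonneg_iff_of_pos_left (div_pos two_pos (P.B_self_pos hβ)),
    mul_nonneg_iff_of_pos_left (div_pos two_pos (P.B_self_pos (P.Δ_sub ha)))]

lemma dual_exists_leviWeyl_isDominant {α : V} (hα : α ∈ P.Δ) :
    (∃ w ∈ P.dual.leviWeyl (P.coroot α), P.dual.IsDominant (w (P.coroot α))) ↔
      ∃ w ∈ P.leviWeyl α, P.IsDominant (w α) := by
  rw [P.dual_leviWeyl]
  refine exists_congr fun w => and_congr_right fun hw => ?_
  have hwW := P.leviWeyl_le_weylGroup α hw
  rw [← P.coroot_weylGroup hwW, P.dual_isDominant (P.weylGroup_mem hwW α (P.Δ_sub hα))]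

lemma IsDualHighest.isShort {h : V} (hh : P.IsDualHighest h) : P.IsShort h :=
  (P.dual_isLong hh.1).mp (P.dual_isHighestRoot.mpr hh).isLong

/-! ### Fundamental weights -/

variable {P} {α η : V}

lemma B_fundamental_coroot [DecidableEq V] (hα : α ∈ P.Δ)
    (hη : ∀ a ∈ P.Δ, P.B η (P.coroot a) = if a = α then 1 else 0) (β : V) :
    P.B η (P.coroot β) = P.corootMult β α := by
  have hsimple : ∀ a ∈ P.Δ, P.B a η = if a = α then P.B a a / 2 else 0 := by
    intro a ha
    have h := hη a ha
    have hb := (P.B_self_pos (P.Δ_sub ha)).ne'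
    rw [P.B_coroot_right, P.B_symm η a] at h
    split_ifs at h ⊢
    · field_simp at h
      linarith
    · exact (mul_eq_zero.mp h).resolve_left (div_ne_zero two_ne_zero hb)
  rw [P.B_symm, P.B_eq_sum, Finset.sum_eq_single_of_mem α hα, hsimple α hα, if_pos rfl, corootMult]
  intro a ha hne
  rw [hsimple a ha, if_neg hne, mul_zero]

lemma IsQuasiConstant.coord_eq_one_and_corootMult_eq_one (hα : α ∈ P.Δ)
    (hη : ∀ β : V, P.B η (P.coroot β) = P.corootMult β α) (hq : P.IsQuasiConstant η)
    {h : V} (hh : h ∈ P.posRoots) (hlen : P.B h h = P.B α α) (hpos : 0 < P.coord h α) :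
    P.coord h α = 1 ∧ P.corootMult h α = 1 := by
  have hαΦ := P.Δ_sub hα
  have hb := P.B_self_pos hαΦ
  have hαα : P.corootMult α α = 1 := by
    rw [P.corootMult_eq _ hα, P.coord_self hα, div_self hb.ne', mul_one]
  have hc : P.corootMult h α = P.coord h α := by
    rw [P.corootMult_eq _ hα, hlen, div_self hb.ne', mul_one]
  obtain ⟨w, hw, rfl⟩ := P.exists_weylGroup_apply_eq (P.mem_posRoots.mp hh).1 hαΦ hlen
  have := hq α hαΦ (by rw [hη, hαα]; exact one_ne_zero) w hw
  rw [← P.coroot_weylGroup hw, hη, hη, hαα, div_one, hc] at this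
  rw [hc]
  simp only [Set.mem_insert_iff, Set.mem_singleton_iff] at this
  rcases this with h | h | h
  · linarith
  · linarith
  · exact ⟨h, h⟩

lemma IsQuasiConstant.isSpecial_or_isCospecial (hα : α ∈ P.Δ)
    (hη : ∀ β : V, P.B η (P.coroot β) = P.corootMult β α) (hq : P.IsQuasiConstant η) :
    P.IsSpecial α ∨ P.IsCospecial α := by
  have hαΦ := P.Δ_sub hα
  have hαpos := P.simple_mem_posRoots hα
  rcases P.isLong_or_isShort hαΦ with hl | hs
  · refine Or.inl ⟨hα, fun h hh => ?_⟩
    have hle := hh.2 α hαpos α hα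
    rw [P.coord_self hα] at hle
    exact (hq.coord_eq_one_and_corootMult_eq_one hα hη (hh.mem_posRoots hα)
      (le_antisymm (hl h hh.1) (hh.isLong α hαΦ)) (by linarith)).1
  · refine Or.inr ⟨hα, fun h hh => ?_⟩
    have hlen := le_antisymm (hh.isShort P α hαΦ) (hs h hh.1)
    have hb := P.B_self_pos hαΦ
    have hle := hh.2 α hαpos α hα
    rw [P.corootMult_eq _ hα, P.corootMult_eq _ hα, P.coord_self hα, hlen, div_self hb.ne'] at hle
    exact (hq.coord_eq_one_and_corootMult_eq_one hα hη (P.coroot_mem_dual_posRoots.mp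
      ((P.dual_isHighestRoot.mpr hh).mem_posRoots (P.coroot_mem_dual_simple.mpr hα))) hlen
      (by linarith)).2

lemma div_mem_of_mem {x y : ℚ} (hx : x = -1 ∨ x = 0 ∨ x = 1) (hy : y = -1 ∨ y = 0 ∨ y = 1) :
    x / y ∈ ({-1, 0, 1} : Set ℚ) := by
  rcases hx with rfl | rfl | rfl <;> rcases hy with rfl | rfl | rfl <;> norm_num

lemma isQuasiConstant_of_isSpecial_or_isCospecial
    (hη : ∀ β : V, P.B η (P.coroot β) = P.corootMult β α)
    (h : P.IsSpecial α ∨ P.IsCospecial α) : P.IsQuasiConstant η := by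
  intro β hβ _ w hw
  have hwβ := P.weylGroup_mem hw β hβ
  rw [← P.coroot_weylGroup hw, hη, hη]
  rcases h with hs | hc
  · rw [P.corootMult_eq _ hs.1, P.corootMult_eq _ hs.1, P.weylGroup_B hw, mul_div_mul_right _ _
      (div_pos (P.B_self_pos (P.Δ_sub hs.1)) (P.B_self_pos hβ)).ne']
    exact div_mem_of_mem (hs.coord_mem hwβ) (hs.coord_mem hβ)
  · rw [← P.dual_coord, ← P.dual_coord]
    exact div_mem_of_mem ((P.dual_isSpecial.mpr hc).coord_mem (P.coroot_mem_dual.mpr hwβ))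
      ((P.dual_isSpecial.mpr hc).coord_mem (P.coroot_mem_dual.mpr hβ))

end RootSystemBase

open RootSystemBase in
/-- **Theorem (quasi-constancy via maximal Levi Weyl groups).**
Let `(V, Φ)` be a reduced irreducible root system with base `Δ` and `α ∈ Δ`.
TFAE: (1) the fundamental weight `η(α)` is quasi-constant; (2) `α` is special or
co-special; (3) `dom(α) = dom_α(α)`, i.e. some `w ∈ W_α` makes `w α` `Δ`-dominant. -/
theorem quasiConstant_iff_special_or_cospecial_iff_leviDominant
    {V : Type*} [AddCommGroup V] [Module ℚ V] [FiniteDimensional ℚ V] [DecidableEq V]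
    (P : RootSystemBase V) (α : V) (hα : α ∈ P.Δ)
    (η : V) (hη : ∀ α' ∈ P.Δ, P.B η (P.coroot α') = if α' = α then 1 else 0) :
    (P.IsQuasiConstant η ↔ (P.IsSpecial α ∨ P.IsCospecial α)) ∧
    ((P.IsSpecial α ∨ P.IsCospecial α) ↔ ∃ w ∈ P.leviWeyl α, P.IsDominant (w α)) := by
  have hαΦ := P.Δ_sub hα
  have hη' := B_fundamental_coroot hα hη
  refine ⟨⟨fun hq => hq.isSpecial_or_isCospecial hα hη',
    isQuasiConstant_of_isSpecial_or_isCospecial hη'⟩, ?_, fun hex => ?_⟩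
  · rintro (hs | hc)
    · exact hs.exists_leviWeyl_isDominant
    · exact (P.dual_exists_leviWeyl_isDominant hα).mp
        (P.dual_isSpecial.mpr hc).exists_leviWeyl_isDominant
  · rcases P.isLong_or_isShort hαΦ with hl | hs
    · exact Or.inl (isSpecial_of_leviWeyl_isDominant hα hl hex)
    · exact Or.inr (P.dual_isSpecial.mp (isSpecial_of_leviWeyl_isDominant
        (P.coroot_mem_dual_simple.mpr hα) ((P.dual_isLong hαΦ).mpr hs)
        ((P.dual_exists_leviWeyl_isDominant hα).mpr hex)))
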